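/- Let G be a graph having no isolated vertices. Then the following are equivalent: (1) G belongs to the class W2; (2) G is not isomorphic to the path P3 and the graph G − v obtained by deleting v is well-covered for every vertex v ∈ V(G). -/

import Mathlib

open SimpleGraph

/-- A set of vertices is independent if its elements are pairwise nonadjacent. -/
def IsIndep {V : Type*} (G : SimpleGraph V) (S : Set V) : Prop :=
  S.Pairwise fun a b => ¬ G.Adj a b

/-- The closed neighborhood `N[S]` of a set of vertices. -/
def closedNbhd {V : Type*} (G : SimpleGraph V) (S : Set V) : Set V :=
  S ∪ {x | ∃ s ∈ S, G.Adj s x}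

/-- The open neighborhood `N(S) = N[S] \ S` of a set of vertices. -/
def openNbhd {V : Type*} (G : SimpleGraph V) (S : Set V) : Set V :=
  closedNbhd G S \ S

/-- `S` dominates `T` if `T ⊆ N[S]`. -/
def Dominates {V : Type*} (G : SimpleGraph V) (S T : Set V) : Prop :=
  T ⊆ closedNbhd G S

/-- `N₂(v)`: the set of vertices at distance exactly 2 from `v`. -/
def N2 {V : Type*} (G : SimpleGraph V) (v : V) : Set V :=
  {u | u ≠ v ∧ ¬ G.Adj v u ∧ ∃ w, G.Adj v w ∧ G.Adj w u}

/-- A maximal independent set of the subgraph of `G` induced by `A`. -/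
def IsMaximalIndepOn {V : Type*} (G : SimpleGraph V) (A S : Set V) : Prop :=
  S ⊆ A ∧ IsIndep G S ∧ ∀ T, T ⊆ A → IsIndep G T → S ⊆ T → S = T

/-- A maximal independent set of `G`. -/
def IsMaximalIndep {V : Type*} (G : SimpleGraph V) (S : Set V) : Prop :=
  IsMaximalIndepOn G Set.univ S

/-- A maximum independent set of the subgraph of `G` induced by `A`. -/
def IsMaxIndepOn {V : Type*} (G : SimpleGraph V) (A S : Set V) : Prop :=
  S ⊆ A ∧ IsIndep G S ∧ ∀ T, T ⊆ A → IsIndep G T → T.ncard ≤ S.ncard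

/-- A maximum independent set of `G`. -/
def IsMaxIndep {V : Type*} (G : SimpleGraph V) (S : Set V) : Prop :=
  IsMaxIndepOn G Set.univ S

/-- The independence number of the subgraph of `G` induced by `A`. -/
noncomputable def alphaOn {V : Type*} (G : SimpleGraph V) (A : Set V) : ℕ :=
  sSup {n | ∃ S, S ⊆ A ∧ IsIndep G S ∧ S.ncard = n}

/-- The independence number `α(G)`. -/
noncomputable def alpha {V : Type*} (G : SimpleGraph V) : ℕ :=
  alphaOn G Set.univ

/-- The subgraph of `G` induced by `A` is well-covered. -/
def WellCoveredOn {V : Type*} (G : SimpleGraph V) (A : Set V) : Prop :=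
  ∀ S, IsMaximalIndepOn G A S → IsMaxIndepOn G A S

/-- `G` is well-covered: every maximal independent set is maximum. -/
def WellCovered {V : Type*} (G : SimpleGraph V) : Prop :=
  WellCoveredOn G Set.univ

/-- The subgraph of `G` induced by `A` is in the class `W₂`. -/
def W2On {V : Type*} (G : SimpleGraph V) (A : Set V) : Prop :=
  ∀ S₁ S₂ : Set V, S₁ ⊆ A → S₂ ⊆ A → IsIndep G S₁ → IsIndep G S₂ → Disjoint S₁ S₂ →
    ∃ T₁ T₂ : Set V, S₁ ⊆ T₁ ∧ S₂ ⊆ T₂ ∧ IsMaxIndepOn G A T₁ ∧ IsMaxIndepOn G A T₂ ∧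
      Disjoint T₁ T₂

/-- `G` belongs to the class `W₂`: every two pairwise disjoint independent sets are
included in two pairwise disjoint maximum independent sets. -/
def W2 {V : Type*} (G : SimpleGraph V) : Prop :=
  W2On G Set.univ

/-- `v` is a shedding vertex: for every independent set `S ⊆ V(G) \ N[v]` there exists
`u ∈ N(v)` such that `S ∪ {u}` is independent. -/
def Shedding {V : Type*} (G : SimpleGraph V) (v : V) : Prop :=
  ∀ S : Set V, Disjoint S (closedNbhd G {v}) → IsIndep G S →
    ∃ u ∈ G.neighborSet v, IsIndep G (insert u S)

/-- The edge `xy` is relating: there is an independent set `S ⊆ V(G) \ N[{x,y}]` such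
that both `S ∪ {x}` and `S ∪ {y}` are maximal independent sets of `G`. -/
def Relating {V : Type*} (G : SimpleGraph V) (x y : V) : Prop :=
  ∃ S : Set V, IsIndep G S ∧ Disjoint S (closedNbhd G {x, y}) ∧
    IsMaximalIndep G (insert x S) ∧ IsMaximalIndep G (insert y S)

/-- `G` contains no cycle of length `k` (as a subgraph). -/
def CycleFree {V : Type*} (G : SimpleGraph V) (k : ℕ) : Prop :=
  ∀ (u : V) (w : G.Walk u u), w.IsCycle → w.length ≠ k

/-- A vertex is simplicial if its closed neighborhood is a clique. -/
def Simplicial {V : Type*} (G : SimpleGraph V) (v : V) : Prop :=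
  G.IsClique (closedNbhd G {v})

/-
A maximal independent set `S` of `G` that avoids `v` is maximal in `G - v`, hence, when `G - v`
is well-covered, at least as large as every independent set avoiding `v`. So if all `G - v` are
well-covered and some independent `T` is larger than `S`, then `S ∪ T` is everything, and a
common vertex of `S` and `T` would be isolated: `T` is the complement of `S`. For `s ∈ S`, a
maximal independent set of `G - s` containing `S \ {s}` is at least as large as `T`, so it too is
the complement of `S`; thus `S = {s}`. Since `T` has at most one vertex more than `S`, the graph
is `P₃`. Hence `G` is well-covered unless it is `P₃`, which is not: a well-covered graph with a
universal vertex is complete.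

To extend `A` to a maximum independent set of a well-covered `G` avoiding a disjoint independent
set `B`, extend `A` to a maximal independent set `T` of `G - B`, then `T` to a maximal one `W` of
`G`. If some `v ∈ B` were in `W`, then `W \ {v}` would be maximal in `G - v`, although `G - v`
has independent sets as large as `W`, for instance any maximal one through a neighbor of `v`.
Applying this to `(S₁, S₂)` and then to `(S₂, T₁)` gives the pair of sets required for `W₂`.
-/

section

variable {V : Type*} {G : SimpleGraph V} {A B S T W : Set V} {s a b v x y : V}

theorem IsIndep.not_adj (h : IsIndep G S) (hx : x ∈ S) (hy : y ∈ S) : ¬ G.Adj x y :=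
  fun hxy => h hx hy hxy.ne hxy

protected theorem IsIndep.insert (h : IsIndep G S) (hx : ∀ y ∈ S, ¬ G.Adj x y) :
    IsIndep G (insert x S) :=
  Set.Pairwise.insert h fun y hy _ => ⟨hx y hy, fun hyx => hx y hy hyx.symm⟩

theorem isIndep_pair (h : ¬ G.Adj x y) : IsIndep G {x, y} :=
  IsIndep.insert (Set.pairwise_singleton _ _) (by simpa using h)

theorem IsIndep.exists_isMaximalIndepOn [Finite V] (h : IsIndep G S) (hSA : S ⊆ A) :
    ∃ T, S ⊆ T ∧ IsMaximalIndepOn G A T := by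
  obtain ⟨T, hST, hT⟩ :=
    (Set.toFinite {T | T ⊆ A ∧ IsIndep G T}).exists_le_maximal (a := S) ⟨hSA, h⟩
  exact ⟨T, hST, hT.prop.1, hT.prop.2, fun _ hUA hU hTU => hT.eq_of_le ⟨hUA, hU⟩ hTU⟩

theorem IsMaximalIndepOn.mem_of_isIndep_insert (h : IsMaximalIndepOn G A S) (hx : x ∈ A)
    (hi : IsIndep G (insert x S)) : x ∈ S := by
  rw [h.2.2 _ (Set.insert_subset hx h.1) hi (Set.subset_insert x S)]
  exact Set.mem_insert x S

theorem IsMaximalIndepOn.exists_adj (h : IsMaximalIndepOn G A S) (hx : x ∈ A) (hxS : x ∉ S) :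
    ∃ y ∈ S, G.Adj x y := by
  by_contra! hS
  exact hxS (h.mem_of_isIndep_insert hx (h.2.1.insert hS))

theorem IsMaximalIndepOn.mono (h : IsMaximalIndepOn G A S) (hSB : S ⊆ B) (hBA : B ⊆ A) :
    IsMaximalIndepOn G B S :=
  ⟨hSB, h.2.1, fun T hTB => h.2.2 T (hTB.trans hBA)⟩

theorem IsMaxIndepOn.mono (h : IsMaxIndepOn G A S) (hSB : S ⊆ B) (hBA : B ⊆ A) :
    IsMaxIndepOn G B S :=
  ⟨hSB, h.2.1, fun T hTB => h.2.2 T (hTB.trans hBA)⟩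

theorem W2On.wellCoveredOn_sdiff (h : W2On G A) (hB : IsIndep G B) (hBA : B ⊆ A) :
    WellCoveredOn G (A \ B) := by
  intro S hS
  obtain ⟨hSA, hSB⟩ := Set.subset_sdiff.1 hS.1
  obtain ⟨T, U, hST, hBU, hT, -, hTU⟩ := h S B hSA hBA hS.2.1 hB hSB
  have hT' : T ⊆ A \ B := Set.subset_sdiff.2 ⟨hT.1, hTU.mono_right hBU⟩
  rw [hS.2.2 T hT' hT.2.1 hST]
  exact hT.mono hT' Set.sdiff_subset

theorem W2.wellCovered (h : W2 G) : WellCovered G := by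
  have hempty := W2On.wellCoveredOn_sdiff h (Set.pairwise_empty _) (Set.empty_subset _)
  rwa [Set.sdiff_empty] at hempty

theorem W2.wellCoveredOn_compl_singleton (h : W2 G) (v : V) : WellCoveredOn G {v}ᶜ := by
  simpa only [Set.compl_eq_univ_sdiff] using
    W2On.wellCoveredOn_sdiff h (Set.pairwise_singleton v _) (Set.subset_univ _)

theorem isMaximalIndep_singleton_of_isUniversal (h : G.IsUniversal s) : IsMaximalIndep G {s} := by
  refine ⟨Set.subset_univ _, Set.pairwise_singleton _ _, fun T _ hT hsT => ?_⟩
  refine hsT.antisymm fun x hx => ?_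
  by_contra hxs
  exact hT.not_adj (hsT rfl) hx (h (Ne.symm hxs))

theorem WellCovered.eq_top_of_isUniversal (hG : WellCovered G) (h : G.IsUniversal s) : G = ⊤ := by
  refine eq_top_iff_forall_ne_adj.2 fun x y hxy => ?_
  by_contra hadj
  have hs : IsMaxIndep G {s} := hG {s} (isMaximalIndep_singleton_of_isUniversal h)
  have hle := hs.2.2 _ (Set.subset_univ _) (isIndep_pair hadj)
  rw [Set.ncard_pair hxy, Set.ncard_singleton] at hle
  omega

theorem WellCovered.isEmpty_iso_pathGraph_three (hG : WellCovered G) :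
    IsEmpty (G ≃g pathGraph 3) := by
  refine ⟨fun e => ?_⟩
  have center_adj (i : Fin 3) (hi : i ≠ 1) : (pathGraph 3).Adj 1 i := by
    rw [pathGraph_adj]
    revert i
    decide
  have center_universal : G.IsUniversal (e.symm 1) := by
    intro x hx
    rw [← e.map_adj_iff, e.apply_symm_apply]
    exact center_adj _ fun h => hx (by rw [← h, e.symm_apply_apply])
  have ends_adj : G.Adj (e.symm 0) (e.symm 2) :=
    eq_top_iff_forall_ne_adj.1 (hG.eq_top_of_isUniversal center_universal) _ _ (by simp)
  rw [e.symm.map_adj_iff, pathGraph_adj] at ends_adj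
  revert ends_adj
  decide

theorem nonempty_iso_pathGraph_three (hs : {s}ᶜ = ({a, b} : Set V)) (hab : a ≠ b)
    (hsa : G.Adj s a) (hsb : G.Adj s b) (hnab : ¬ G.Adj a b) :
    Nonempty (G ≃g pathGraph 3) := by
  have hnba : ¬ G.Adj b a := fun h => hnab h.symm
  have hbij : Function.Bijective (![a, s, b] : Fin 3 → V) := by
    constructor
    · intro i j hij
      fin_cases i <;> fin_cases j <;> simp_all [hsa.ne, hsa.ne', hsb.ne, hsb.ne', hab.symm]
    · intro x
      obtain rfl | hx := eq_or_ne x s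
      · exact ⟨1, rfl⟩
      · obtain rfl | rfl : x = a ∨ x = b := hs.subset hx
        exacts [⟨0, rfl⟩, ⟨2, rfl⟩]
  refine ⟨RelIso.symm ⟨Equiv.ofBijective _ hbij, fun {i j} => ?_⟩⟩
  rw [pathGraph_adj]
  fin_cases i <;> fin_cases j <;>
    simp [hsa, hsb, hnab, hnba, hsa.symm, hsb.symm]

theorem WellCoveredOn.ncard_le_of_notMem (h : WellCoveredOn G {v}ᶜ) (hS : IsMaximalIndep G S)
    (hvS : v ∉ S) (hT : IsIndep G T) (hvT : v ∉ T) : T.ncard ≤ S.ncard :=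
  (h S (hS.mono (Set.subset_compl_singleton_iff.2 hvS) (Set.subset_univ _))).2.2 T
    (Set.subset_compl_singleton_iff.2 hvT) hT

theorem WellCoveredOn.ncard_le_ncard_add_one (h : WellCoveredOn G {v}ᶜ) (hS : IsMaximalIndep G S)
    (hvS : v ∉ S) (hT : IsIndep G T) : T.ncard ≤ S.ncard + 1 := by
  have hle : (T \ {v}).ncard ≤ S.ncard :=
    h.ncard_le_of_notMem hS hvS (hT.mono Set.sdiff_subset) fun hv => hv.2 rfl
  exact Nat.sub_le_iff_le_add.1 ((Set.pred_ncard_le_ncard_sdiff_singleton T v).trans hle)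

theorem IsMaximalIndep.eq_compl_of_ncard_lt (hS : IsMaximalIndep G S)
    (hiso : ∀ v, (G.neighborSet v).Nonempty) (hw : ∀ v, WellCoveredOn G {v}ᶜ) (hT : IsIndep G T)
    (hlt : S.ncard < T.ncard) : T = Sᶜ := by
  have cover (x : V) : x ∈ S ∨ x ∈ T := by
    by_contra! hx
    exact hlt.not_ge ((hw x).ncard_le_of_notMem hS hx.1 hT hx.2)
  refine Set.Subset.antisymm (fun x hxT hxS => ?_) fun x => (cover x).resolve_left
  obtain ⟨y, hxy⟩ := hiso x
  exact (cover y).elim (fun hy => hS.2.1.not_adj hxS hy hxy) fun hy => hT.not_adj hxT hy hxy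

theorem IsMaximalIndep.eq_singleton_of_ncard_lt [Finite V] (hS : IsMaximalIndep G S)
    (hiso : ∀ v, (G.neighborSet v).Nonempty) (hw : ∀ v, WellCoveredOn G {v}ᶜ) (hT : IsIndep G T)
    (hlt : S.ncard < T.ncard) (hs : s ∈ S) : S = {s} := by
  have hTS : T = Sᶜ := hS.eq_compl_of_ncard_lt hiso hw hT hlt
  obtain ⟨U, hSU, hU⟩ := IsIndep.exists_isMaximalIndepOn (hS.2.1.mono (Set.sdiff_subset (t := {s})))
    (Set.sdiff_subset_compl S {s})
  have hTU : T.ncard ≤ U.ncard :=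
    (hw s U hU).2.2 T (Set.subset_compl_singleton_iff.2 fun h => (hTS ▸ h) hs) hT
  have hUS : U = Sᶜ := hS.eq_compl_of_ncard_lt hiso hw hU.2.1 (hlt.trans_le hTU)
  refine Set.eq_singleton_iff_unique_mem.2 ⟨hs, fun x hx => ?_⟩
  by_contra hxs
  exact (hUS ▸ hSU ⟨hx, hxs⟩ : x ∈ Sᶜ) hx

theorem wellCovered_of_forall_wellCoveredOn_compl_singleton [Finite V]
    (hiso : ∀ v, (G.neighborSet v).Nonempty) (hP : IsEmpty (G ≃g pathGraph 3))
    (hw : ∀ v, WellCoveredOn G {v}ᶜ) : WellCovered G := by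
  intro S hS
  refine ⟨hS.1, hS.2.1, fun T _ hT => ?_⟩
  by_contra! hlt
  have hTS : T = Sᶜ := IsMaximalIndep.eq_compl_of_ncard_lt hS hiso hw hT hlt
  have hadj {x : V} (hx : x ∈ T) : ∃ y ∈ S, G.Adj x y :=
    hS.exists_adj (Set.mem_univ x) (hTS.subset hx)
  obtain ⟨t, ht⟩ : T.Nonempty := Set.nonempty_of_ncard_ne_zero (Nat.ne_zero_of_lt hlt)
  obtain ⟨s, hs, -⟩ := hadj ht
  obtain rfl : S = {s} := IsMaximalIndep.eq_singleton_of_ncard_lt hS hiso hw hT hlt hs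
  have hT2 : T.ncard = 2 := by
    have hle := (hw t).ncard_le_ncard_add_one hS (hTS.subset ht) hT
    rw [Set.ncard_singleton] at hle hlt
    omega
  obtain ⟨a, b, hab, rfl⟩ := Set.ncard_eq_two.1 hT2
  have hsa : G.Adj s a := by simpa [G.adj_comm] using hadj (Set.mem_insert a {b})
  have hsb : G.Adj s b := by simpa [G.adj_comm] using hadj (Set.mem_insert_of_mem a rfl)
  have hnab : ¬ G.Adj a b := hT.not_adj (Set.mem_insert a {b}) (Set.mem_insert_of_mem a rfl)
  exact not_isEmpty_iff.2 (nonempty_iso_pathGraph_three hTS.symm hab hsa hsb hnab) hP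

theorem IsMaximalIndep.sdiff_singleton (hW : IsMaximalIndep G W) (hB : IsIndep G B)
    (hT : IsMaximalIndepOn G Bᶜ T) (hTW : T ⊆ W) (hvB : v ∈ B) :
    IsMaximalIndepOn G {v}ᶜ (W \ {v}) := by
  refine ⟨Set.sdiff_subset_compl W {v}, hW.2.1.mono Set.sdiff_subset, fun U hUv hU hWU => ?_⟩
  refine hWU.antisymm fun x hxU => ⟨?_, hUv hxU⟩
  by_contra hxW
  have hxv : G.Adj x v := by
    obtain ⟨y, hyW, hxy⟩ := hW.exists_adj (Set.mem_univ x) hxW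
    obtain rfl | hyv := eq_or_ne y v
    · exact hxy
    · exact (hU.not_adj hxU (hWU ⟨hyW, hyv⟩) hxy).elim
  have hxB : x ∉ B := fun hx => hB.not_adj hx hvB hxv
  have hTU : T ⊆ U := fun y hy => hWU ⟨hTW hy, fun h => hT.1 hy (h ▸ hvB)⟩
  exact hxW (hTW (hT.mem_of_isIndep_insert hxB (hU.mono (Set.insert_subset hxU hTU))))

theorem WellCovered.not_isMaximalIndepOn_sdiff_singleton [Finite V] (hG : WellCovered G)
    (hv : (G.neighborSet v).Nonempty) (hw : WellCoveredOn G {v}ᶜ) (hW : IsIndep G W)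
    (hvW : v ∈ W) : ¬ IsMaximalIndepOn G {v}ᶜ (W \ {v}) := by
  intro hmax
  obtain ⟨u, hvu⟩ := hv
  obtain ⟨U, huU, hU⟩ := IsIndep.exists_isMaximalIndepOn (G := G)
    (Set.pairwise_singleton u _) (Set.subset_univ {u})
  have hvU : v ∉ U := fun h => hU.2.1.not_adj h (huU rfl) hvu
  have hWU : W.ncard ≤ U.ncard := (hG U hU).2.2 W (Set.subset_univ _) hW
  have hUW : U.ncard ≤ (W \ {v}).ncard :=
    (hw _ hmax).2.2 U (Set.subset_compl_singleton_iff.2 hvU) hU.2.1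
  exact (Set.ncard_sdiff_singleton_lt_of_mem hvW).not_ge (hWU.trans hUW)

theorem WellCovered.exists_isMaxIndep_disjoint [Finite V] (hG : WellCovered G)
    (hiso : ∀ v, (G.neighborSet v).Nonempty) (hw : ∀ v, WellCoveredOn G {v}ᶜ)
    (hA : IsIndep G A) (hB : IsIndep G B) (hAB : Disjoint A B) :
    ∃ W, A ⊆ W ∧ IsMaxIndep G W ∧ Disjoint W B := by
  obtain ⟨T, hAT, hT⟩ := hA.exists_isMaximalIndepOn (Set.subset_compl_iff_disjoint_right.2 hAB)
  obtain ⟨W, hTW, hW⟩ := hT.2.1.exists_isMaximalIndepOn (Set.subset_univ T)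
  refine ⟨W, hAT.trans hTW, hG W hW, Set.disjoint_left.2 fun v hvW hvB => ?_⟩
  exact hG.not_isMaximalIndepOn_sdiff_singleton (hiso v) (hw v) hW.2.1 hvW
    (IsMaximalIndep.sdiff_singleton hW hB hT hTW hvB)

theorem WellCovered.w2 [Finite V] (hG : WellCovered G)
    (hiso : ∀ v, (G.neighborSet v).Nonempty) (hw : ∀ v, WellCoveredOn G {v}ᶜ) : W2 G := by
  intro S₁ S₂ _ _ hS₁ hS₂ hS
  obtain ⟨T₁, hST₁, hT₁, hTS⟩ := hG.exists_isMaxIndep_disjoint hiso hw hS₁ hS₂ hS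
  obtain ⟨T₂, hST₂, hT₂, hTT⟩ := hG.exists_isMaxIndep_disjoint hiso hw hS₂ hT₁.2.1 hTS.symm
  exact ⟨T₁, T₂, hST₁, hST₂, hT₁, hT₂, hTT.symm⟩

end

/-- A graph with no isolated vertices is in `W₂` iff it is not isomorphic
to `P₃` and `G − v` is well-covered for every vertex `v`. -/
theorem stmt9 {V : Type*} [Fintype V] (G : SimpleGraph V)
    (hiso : ∀ v : V, (G.neighborSet v).Nonempty) :
    W2 G ↔
      (IsEmpty (G ≃g pathGraph 3) ∧ ∀ v : V, WellCoveredOn G {v}ᶜ) := by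
  constructor
  · intro h
    exact ⟨h.wellCovered.isEmpty_iso_pathGraph_three, h.wellCoveredOn_compl_singleton⟩
  · rintro ⟨hP, hw⟩
    exact (wellCovered_of_forall_wellCoveredOn_compl_singleton hiso hP hw).w2 hiso hw
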